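/- Let f : [0,1] → [0,1] be a unimodal, locally eventually onto map with critical point c, and suppose that the set of inhomogeneities 𝓘 is countably infinite. Then there exist countable ordinals α ≤ β and positive integers n and m such that ω(c) ≃ ω^{α+1}·n + 1 and 𝓘 ≃ ω^{β+1}·m + 1. -/

import Mathlib

/-!
Write `K` for `ω(c)` and `I` for the set of inhomogeneities. Since `f` maps `K` onto itself, `I` is
the inverse limit of `f` on `K`, and it projects onto `K`. So `K` is countable; it is infinite, as
otherwise `f` would permute `K` and `I` would be finite (`finite_threads`). Both spaces are countable,
compact and Hausdorff, so by the Mazurkiewicz–Sierpiński theorem (`ordChart_of_rank`,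
`homeoOrd_of_CB`) each is homeomorphic to `ω ^ γ * n + 1`, where `γ` is the index of the last nonempty
Cantor–Bendixson derivative and `n` is its number of points. That theorem is proved by induction on
`γ` for clopen subsets: a clopen set with a single point `p` of top rank is, away from `p`, a disjoint
union of clopen sets of smaller rank, and their order types add up to `ω ^ γ`.

It remains to see that both indices are successors, and to compare them. They are nonzero because the
spaces are infinite. The critical point is not in `K` (`critical_notMem`), so `f` is locally
injective on `K` and preserves its derivatives (`mapsTo_CB`); by `LEO`, points of `K` are determined
by their itineraries with respect to `c` (`eq_of_itinerary`). If the index were a limit, some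
infinite earlier derivative would lie in any given neighbourhood of the finite last one. But an
invariant set close enough to a finite invariant set is contained in it (`exists_isolating`),
a contradiction. For `I` the same argument applies to first coordinates, with the shift in place of
`f`. Finally, the derivatives of `K` are covered by the projections of those of `I`
(`CB_subset_image`), so the index for `K` is at most the one for `I`.
-/

open Set Filter

noncomputable section

/-- The unit interval `[0,1]` as a subtype of `ℝ`. -/
abbrev unitI : Type := Set.Icc (0 : ℝ) 1

/-- `f : [0,1] → [0,1]` is unimodal with critical point `c`: continuous, `c ∈ (0,1)`,
strictly increasing on `[0,c]` and strictly decreasing on `[c,1]`. -/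
def Unimodal (f : unitI → unitI) (c : unitI) : Prop :=
  Continuous f ∧ 0 < (c : ℝ) ∧ (c : ℝ) < 1 ∧
    StrictMonoOn f {x : unitI | x ≤ c} ∧ StrictAntiOn f {x : unitI | c ≤ x}

/-- `f` is locally eventually onto: for every `ε > 0` and every `x`, some iterate of `f`
maps the `ε`-ball about `x` (in `[0,1]`) onto all of `[0,1]`. -/
def LEO (f : unitI → unitI) : Prop :=
  ∀ ε : ℝ, 0 < ε → ∀ x : unitI, ∃ N : ℕ, f^[N] '' Metric.ball x ε = Set.univ

/-- The omega-limit set of `c` under `f`: `⋂ₙ closure {fᵐ(c) : m ≥ n}`. -/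
def omegaLimitSet (f : unitI → unitI) (c : unitI) : Set unitI :=
  ⋂ n : ℕ, closure {y : unitI | ∃ m : ℕ, n ≤ m ∧ f^[m] c = y}

/-- The inverse limit of `f`, as a subset of the product `ℕ → [0,1]`
(the subspace topology coincides with the topology induced by the usual metric). -/
def InvLim (f : unitI → unitI) : Set (ℕ → unitI) :=
  {x | ∀ i : ℕ, f (x (i + 1)) = x i}

/-- The set of inhomogeneities: points of the inverse limit all of whose
coordinates lie in the postcritical omega-limit set. -/
def Inhom (f : unitI → unitI) (c : unitI) : Set (InvLim f) :=
  {x | ∀ n : ℕ, (x : ℕ → unitI) n ∈ omegaLimitSet f c}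

/-- The ordinal space `{ξ : ξ ≤ o}` with its order topology. -/
def OrdSpace (o : Ordinal) : Type _ := Set.Iic o

instance (o : Ordinal) : LinearOrder (OrdSpace o) :=
  inferInstanceAs (LinearOrder (Set.Iic o))

instance (o : Ordinal) : TopologicalSpace (OrdSpace o) := Preorder.topology (OrdSpace o)

instance (o : Ordinal) : OrderTopology (OrdSpace o) := ⟨rfl⟩

/-- `X ≃ ω^γ·k + 1` in the sense of the paper: `X` is homeomorphic to the
ordinal space `{ξ : ξ ≤ o}` with its order topology. -/
def HomeoOrd (X : Type*) [TopologicalSpace X] (o : Ordinal) : Prop :=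
  Nonempty (X ≃ₜ OrdSpace o)

open Topology

/-! ### Cantor–Bendixson derivatives -/

universe u

/-- The Cantor–Bendixson derivatives. A single recursion covers the zero, successor and limit
stages: `x` belongs to stage `γ` iff it is an accumulation point of every earlier stage. -/
def CB (X : Type*) [TopologicalSpace X] (γ : Ordinal.{u}) : Set X :=
  {x | ∀ δ, δ < γ → AccPt x (𝓟 (CB X δ))}
termination_by γ

section CantorBendixson

variable {X : Type*} [TopologicalSpace X]

theorem mem_CB {γ : Ordinal.{u}} {x : X} :
    x ∈ CB X γ ↔ ∀ δ, δ < γ → AccPt x (𝓟 (CB X δ)) := by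
  rw [CB]; rfl

theorem CB_zero : CB X (0 : Ordinal.{u}) = univ := by
  ext x; simp [mem_CB]

theorem CB_anti {γ δ : Ordinal.{u}} (h : γ ≤ δ) : CB X δ ⊆ CB X γ := fun _ hx =>
  mem_CB.2 fun ε hε => mem_CB.1 hx ε (hε.trans_le h)

theorem accPt_of_mem_CB {γ δ : Ordinal.{u}} {x : X} (h : x ∈ CB X δ) (hγ : γ < δ) :
    AccPt x (𝓟 (CB X γ)) := mem_CB.1 h γ hγ

theorem mem_CB_succ {γ : Ordinal.{u}} {x : X} :
    x ∈ CB X (γ + 1) ↔ AccPt x (𝓟 (CB X γ)) := by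
  refine ⟨fun h => accPt_of_mem_CB h (Order.lt_add_one_iff.2 le_rfl),
    fun h => mem_CB.2 fun δ hδ => ?_⟩
  exact h.mono (principal_mono.2 (CB_anti (Order.lt_add_one_iff.1 hδ)))

theorem isClosed_CB [T1Space X] (γ : Ordinal.{u}) : IsClosed (CB X γ) := by
  have : CB X γ = ⋂ δ : Iio γ, derivedSet (CB X δ.1) := by
    ext x; simp [mem_CB, mem_derivedSet]
  rw [this]
  exact isClosed_iInter fun δ => isClosed_derivedSet _

theorem not_accPt_of_finite [T1Space X] {s : Set X} (hs : s.Finite) (x : X) :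
    ¬ AccPt x (𝓟 s) := by
  intro h
  have hc : (s \ {x})ᶜ ∈ 𝓝 x := (hs.subset sdiff_subset).isClosed.isOpen_compl.mem_nhds (by simp)
  obtain ⟨y, ⟨h1, h2⟩, h3⟩ := accPt_iff_nhds.1 h _ hc
  exact h1 ⟨h2, h3⟩

/-- Baire category: a nonempty countable closed set of a compact Hausdorff space is not perfect. -/
theorem exists_not_accPt [CompactSpace X] [T2Space X] [Countable X] {s : Set X}
    (hs : IsClosed s) (hne : s.Nonempty) : ∃ x ∈ s, ¬ AccPt x (𝓟 s) := by
  have := isCompact_iff_compactSpace.1 hs.isCompact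
  have := hne.to_subtype
  obtain ⟨z, y, hy⟩ := nonempty_interior_of_iUnion_of_closed (X := s) (f := fun z : s => {z})
    (fun z => isClosed_singleton) (by ext x; simp)
  obtain rfl : y = z := mem_singleton_iff.1 (interior_subset hy)
  obtain ⟨U, hU, hUe⟩ := isOpen_induced_iff.1 (isOpen_interior (s := {y}))
  refine ⟨y, y.2, fun h => ?_⟩
  have hyU : (y : X) ∈ U := by
    change y ∈ Subtype.val ⁻¹' U
    rw [hUe]; exact hy
  obtain ⟨w, ⟨h1, h2⟩, h3⟩ := accPt_iff_nhds.1 h U (hU.mem_nhds hyU)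
  have hw : (⟨w, h2⟩ : s) ∈ Subtype.val ⁻¹' U := h1
  rw [hUe] at hw
  exact h3 (congrArg Subtype.val (mem_singleton_iff.1 (interior_subset hw)))

/-- A nonempty derivative has countable index, since each earlier stage loses a point. -/
theorem card_le_of_CB_nonempty [CompactSpace X] [T2Space X] [Countable X] {γ : Ordinal.{u}}
    (h : (CB X γ).Nonempty) : γ.card ≤ Cardinal.aleph0 := by
  have key : ∀ δ : Iio γ, ∃ x ∈ CB X δ.1, x ∉ CB X (δ.1 + 1) := fun δ => by
    obtain ⟨x, hx, hx'⟩ := exists_not_accPt (isClosed_CB δ.1) (h.mono (CB_anti δ.2.le))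
    exact ⟨x, hx, fun hh => hx' (mem_CB_succ.1 hh)⟩
  choose g hg hg' using key
  have hinj : Function.Injective g := by
    intro a b hab
    by_contra hne
    rcases lt_or_gt_of_ne hne with hlt | hlt
    · exact hg' a (CB_anti (Order.add_one_le_of_lt (show a.1 < b.1 from hlt)) (hab ▸ hg b))
    · exact hg' b (CB_anti (Order.add_one_le_of_lt (show b.1 < a.1 from hlt)) (hab ▸ hg a))
  have : Countable (Iio γ) := hinj.countable
  have h2 := Cardinal.mk_le_aleph0 (α := Iio γ)
  rw [Cardinal.mk_Iio_ordinal] at h2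
  exact Cardinal.lift_le_aleph0.1 h2

theorem exists_CB_eq_empty (X : Type*) [TopologicalSpace X] [CompactSpace X] [T2Space X]
    [Countable X] : ∃ γ : Ordinal.{u}, CB X γ = ∅ := by
  refine ⟨(Cardinal.aleph 1).ord, ?_⟩
  by_contra h
  have := card_le_of_CB_nonempty (nonempty_iff_ne_empty.2 h)
  rw [Cardinal.card_ord] at this
  exact absurd Cardinal.aleph0_lt_aleph_one (not_lt.2 this)

/-- At limit stages the derivatives intersect, so a compact set that meets all earlier stages
meets the limit stage; hence a nonempty closed set has a last derivative, and it is finite. -/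
theorem exists_rank [CompactSpace X] [T2Space X] [Countable X] {U : Set X} (hU : IsClosed U)
    (hne : U.Nonempty) : ∃ γ : Ordinal.{u}, (U ∩ CB X γ).Nonempty ∧ (U ∩ CB X γ).Finite ∧
      U ∩ CB X (γ + 1) = ∅ := by
  classical
  have hex : ∃ γ : Ordinal.{u}, U ∩ CB X γ = ∅ := by
    obtain ⟨γ, h⟩ := exists_CB_eq_empty.{u} X
    exact ⟨γ, by simp [h]⟩
  obtain ⟨ξ, hξ, hmin⟩ := WellFounded.has_min (wellFounded_lt (α := Ordinal.{u}))
    {γ | U ∩ CB X γ = ∅} hex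
  have hlt : ∀ δ < ξ, (U ∩ CB X δ).Nonempty := fun δ hδ =>
    nonempty_iff_ne_empty.2 fun h => hmin δ h hδ
  rcases Ordinal.zero_or_succ_or_isSuccLimit ξ with h0 | ⟨γ, rfl⟩ | hlim
  · subst h0
    have : U ∩ CB X (0 : Ordinal.{u}) = ∅ := hξ
    rw [CB_zero, inter_univ] at this
    exact absurd this hne.ne_empty
  · refine ⟨γ, hlt γ (Order.lt_succ γ), ?_, hξ⟩
    by_contra hinf
    have hcl : IsClosed (U ∩ CB X γ) := hU.inter (isClosed_CB γ)
    obtain ⟨x, hx, hacc⟩ := Set.Infinite.exists_accPt_of_subset_isCompact hinf hcl.isCompact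
      subset_rfl
    have : x ∈ U ∩ CB X (Order.succ γ) :=
      ⟨hx.1, mem_CB_succ.2 (hacc.mono (principal_mono.2 inter_subset_right))⟩
    rw [show U ∩ CB X (Order.succ γ) = ∅ from hξ] at this
    exact this
  · exfalso
    have : Nonempty (Iio ξ) := ⟨⟨0, by simpa using hlim.bot_lt⟩⟩
    have hI : (⋂ δ : Iio ξ, U ∩ CB X δ.1).Nonempty := by
      apply IsCompact.nonempty_iInter_of_directed_nonempty_isCompact_isClosed
      · intro a b
        rcases le_total a b with h | h
        · exact ⟨b, inter_subset_inter_right _ (CB_anti h), subset_rfl⟩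
        · exact ⟨a, subset_rfl, inter_subset_inter_right _ (CB_anti h)⟩
      · exact fun δ => hlt _ δ.2
      · exact fun δ => (hU.inter (isClosed_CB _)).isCompact
      · exact fun δ => hU.inter (isClosed_CB _)
    obtain ⟨x, hx⟩ := hI
    have hx' := fun δ (h : δ < ξ) => (mem_iInter.1 hx ⟨δ, h⟩)
    have : x ∈ U ∩ CB X ξ := ⟨(hx' 0 (by simpa using hlim.bot_lt)).1, mem_CB.2 fun δ hδ =>
      accPt_of_mem_CB (hx' (δ + 1) (hlim.add_one_lt hδ)).2 (Order.lt_add_one_iff.2 le_rfl)⟩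
    rw [show U ∩ CB X ξ = ∅ from hξ] at this
    exact this

/-- A continuous, locally injective self-map preserves every derivative. -/
theorem mapsTo_CB {g : X → X} (hg : Continuous g) (hloc : ∀ x, ∃ U ∈ 𝓝 x, InjOn g U)
    (γ : Ordinal.{u}) : MapsTo g (CB X γ) (CB X γ) := by
  induction γ using WellFoundedLT.induction with
  | ind γ ih =>
    intro x hx
    refine mem_CB.2 fun δ hδ => accPt_iff_nhds.2 fun V hV => ?_
    obtain ⟨U, hU, hinj⟩ := hloc x
    obtain ⟨y, ⟨⟨hyU, hyV⟩, hyD⟩, hne⟩ := accPt_iff_nhds.1 (accPt_of_mem_CB hx hδ) (U ∩ g ⁻¹' V)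
      (inter_mem hU (hg.continuousAt hV))
    exact ⟨g y, ⟨hyV, ih δ hδ hyD⟩, fun h => hne (hinj hyU (mem_of_mem_nhds hU) h)⟩

/-- Derivatives of a compact quotient are covered by the derivatives upstairs. -/
theorem CB_subset_image {Y : Type*} [TopologicalSpace Y] [CompactSpace Y] [T2Space Y] [T2Space X]
    {p : Y → X} (hp : Continuous p) (hs : Function.Surjective p) (γ : Ordinal.{u}) :
    CB X γ ⊆ p '' CB Y γ := by
  induction γ using WellFoundedLT.induction with
  | ind γ ih =>
    intro x hx
    by_contra hcon
    have hfib : ∀ y ∈ p ⁻¹' {x}, ∃ δ < γ, ∃ N, IsOpen N ∧ y ∈ N ∧ N ∩ CB Y δ ⊆ {y} := by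
      intro y hy
      have h1 : y ∉ CB Y γ := fun h => hcon ⟨y, h, hy⟩
      rw [mem_CB] at h1
      push Not at h1
      obtain ⟨δ, hδ, hacc⟩ := h1
      rw [accPt_iff_nhds] at hacc
      push Not at hacc
      obtain ⟨N, hN, h2⟩ := hacc
      obtain ⟨O, hO, hOo, hyO⟩ := mem_nhds_iff.1 hN
      exact ⟨δ, hδ, O, hOo, hyO, fun z hz => h2 z ⟨hO hz.1, hz.2⟩⟩
    choose! d hd N hNo hyN hN using hfib
    have hK : IsCompact (p ⁻¹' {x}) := (isClosed_singleton.preimage hp).isCompact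
    obtain ⟨t, htf, htc⟩ := hK.elim_nhds_subcover N (fun y hy => (hNo y hy).mem_nhds (hyN y hy))
    obtain ⟨y₀, hy₀⟩ := hs x
    have htne : t.Nonempty := by
      obtain ⟨i, hi, -⟩ := mem_iUnion₂.1 (htc (show y₀ ∈ p ⁻¹' {x} from hy₀))
      exact ⟨i, hi⟩
    obtain ⟨m, hm, hmax⟩ := t.exists_max_image d htne
    have hO : IsOpen (⋃ y ∈ t, N y) := isOpen_biUnion fun y hy => hNo y (htf y hy)
    have hV : IsOpen (p '' (⋃ y ∈ t, N y)ᶜ)ᶜ :=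
      (hO.isClosed_compl.isCompact.image hp).isClosed.isOpen_compl
    have hxV : x ∈ (p '' (⋃ y ∈ t, N y)ᶜ)ᶜ := by
      rintro ⟨y, hy, hyx⟩
      exact hy (htc hyx)
    obtain ⟨x', ⟨hx'V, hx'D⟩, hne⟩ :=
      accPt_iff_nhds.1 (accPt_of_mem_CB hx (hd m (htf m hm))) _ (hV.mem_nhds hxV)
    obtain ⟨y', hy', rfl⟩ := ih _ (hd m (htf m hm)) hx'D
    have hy'O : y' ∈ ⋃ y ∈ t, N y := by
      by_contra h
      exact hx'V ⟨y', h, rfl⟩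
    obtain ⟨y, hy, hyN'⟩ := mem_iUnion₂.1 hy'O
    obtain rfl : y' = y := mem_singleton_iff.1 (hN y (htf y hy) ⟨hyN', CB_anti (hmax y hy) hy'⟩)
    exact hne (htf y' hy)

end CantorBendixson

/-! ### Charts by ordinals -/

section Charts

variable {X : Type*} [TopologicalSpace X]

/-- `h` restricts to a continuous bijection of `U` onto the ordinals below `a`. For compact `U` it is
a homeomorphism onto that initial segment. -/
def OrdChart (U : Set X) (a : Ordinal.{u}) : Prop :=
  ∃ h : X → Ordinal.{u}, ContinuousOn h U ∧ InjOn h U ∧ h '' U = Iio a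

theorem ordChart_empty : OrdChart (∅ : Set X) (0 : Ordinal.{u}) :=
  ⟨fun _ => 0, by simp, by simp, by ext x; simp⟩

theorem OrdChart.union {A B : Set X} {a b : Ordinal.{u}} (hA : IsOpen A) (hB : IsOpen B)
    (hd : Disjoint A B) (ha : OrdChart A a) (hb : OrdChart B b) : OrdChart (A ∪ B) (a + b) := by
  classical
  obtain ⟨f, hfc, hfi, hfe⟩ := ha
  obtain ⟨g, hgc, hgi, hge⟩ := hb
  have hf : ∀ x ∈ A, f x < a := fun x hx => by
    have := mem_image_of_mem f hx; rwa [hfe] at this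
  have hg : ∀ x ∈ B, g x < b := fun x hx => by
    have := mem_image_of_mem g hx; rwa [hge] at this
  set φ : X → Ordinal.{u} := fun x => if x ∈ A then f x else a + g x
  have hφA : ∀ x ∈ A, φ x = f x := fun x hx => if_pos hx
  have hφB : ∀ x ∈ B, φ x = a + g x := fun x hx => if_neg fun h => disjoint_left.1 hd h hx
  refine ⟨φ, ?_, ?_, ?_⟩
  · refine ContinuousOn.union_of_isOpen (hfc.congr hφA) ?_ hA hB
    exact ((Ordinal.isNormal_add_right a).continuous.comp_continuousOn hgc).congr hφB
  · rintro x (hx | hx) y (hy | hy) hxy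
    · rw [hφA x hx, hφA y hy] at hxy
      exact hfi hx hy hxy
    · rw [hφA x hx, hφB y hy] at hxy
      exact absurd (hf x hx) (not_lt.2 (hxy ▸ le_self_add))
    · rw [hφA y hy, hφB x hx] at hxy
      exact absurd (hf y hy) (not_lt.2 (hxy ▸ le_self_add))
    · rw [hφB x hx, hφB y hy] at hxy
      exact hgi hx hy (add_left_cancel hxy)
  · ext z
    constructor
    · rintro ⟨x, hx | hx, rfl⟩
      · rw [hφA x hx]; exact (hf x hx).trans_le le_self_add
      · rw [hφB x hx]; exact (add_lt_add_iff_left a).2 (hg x hx)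
    · intro hz
      rcases lt_or_ge z a with h | h
      · obtain ⟨x, hx, rfl⟩ : z ∈ f '' A := hfe ▸ h
        exact ⟨x, Or.inl hx, hφA x hx⟩
      · have : z - a ∈ g '' B := by
          rw [hge]
          exact (Ordinal.sub_lt_of_le h).2 hz
        obtain ⟨x, hx, hxz⟩ := this
        exact ⟨x, Or.inr hx, by rw [hφB x hx, hxz, Ordinal.add_sub_cancel_of_le h]⟩

/-- Partial sums `a 0 + ⋯ + a (k - 1)`, with later terms added on the right. -/
def psum (a : ℕ → Ordinal.{u}) : ℕ → Ordinal.{u}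
  | 0 => 0
  | k + 1 => psum a k + a k

theorem psum_mono (a : ℕ → Ordinal.{u}) : Monotone (psum a) :=
  monotone_nat_of_le_succ fun _ => le_self_add

/-- Gluing countably many disjoint charts, with one further point at the end of the sum. -/
theorem OrdChart.iUnion {V : ℕ → Set X} {a : ℕ → Ordinal.{u}} {p : X} (hV : ∀ i, IsClopen (V i))
    (hd : ∀ i j, i ≠ j → Disjoint (V i) (V j)) (hp : ∀ i, p ∉ V i)
    (h : ∀ i, OrdChart (V i) (a i)) : OrdChart ({p} ∪ ⋃ i, V i) ((⨆ k, psum a k) + 1) := by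
  classical
  choose f hfc hfi hfe using h
  set S := ⨆ k, psum a k with hS
  have hf : ∀ i, ∀ x ∈ V i, f i x < a i := fun i x hx => by
    have := mem_image_of_mem (f i) hx; rwa [hfe] at this
  set φ : X → Ordinal.{u} := fun x =>
    if hx : ∃ i, x ∈ V i then psum a hx.choose + f hx.choose x else S with hφ
  have hφV : ∀ i, ∀ x ∈ V i, φ x = psum a i + f i x := by
    intro i x hx
    have hex : ∃ i, x ∈ V i := ⟨i, hx⟩
    have : hex.choose = i := by
      by_contra hne
      exact disjoint_left.1 (hd _ _ hne) hex.choose_spec hx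
    simp only [hφ, dif_pos hex, this]
  have hφp : φ p = S := dif_neg (by simpa using hp)
  have hle : ∀ k, psum a k ≤ S := fun k => le_ciSup Ordinal.bddAbove_of_small k
  have hlt : ∀ i, ∀ x ∈ V i, φ x < psum a (i + 1) := fun i x hx => by
    rw [hφV i x hx]; exact (add_lt_add_iff_left _).2 (hf i x hx)
  have hge : ∀ i, ∀ x ∈ V i, psum a i ≤ φ x := fun i x hx => by
    rw [hφV i x hx]; exact le_self_add
  have hltS : ∀ i, ∀ x ∈ V i, φ x < S := fun i x hx => (hlt i x hx).trans_le (hle _)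
  have hord : ∀ i j, i < j → ∀ x ∈ V i, ∀ y ∈ V j, φ x < φ y := fun i j hij x hx y hy =>
    (hlt i x hx).trans_le ((psum_mono a hij).trans (hge j y hy))
  refine ⟨φ, ?_, ?_, ?_⟩
  · rintro x (rfl | hx)
    · change Tendsto φ _ (𝓝 (φ x))
      rw [hφp]
      refine tendsto_order.2 ⟨fun b hb => ?_, fun b hb => ?_⟩
      · obtain ⟨k, hk⟩ := Ordinal.lt_iSup_iff.1 hb
        have hcl : IsClosed (⋃ i ∈ Finset.range k, V i) :=
          isClosed_biUnion_finset fun i _ => (hV i).1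
        have hmem : (⋃ i ∈ Finset.range k, V i)ᶜ ∈ 𝓝[{x} ∪ ⋃ i, V i] x :=
          mem_nhdsWithin_of_mem_nhds (hcl.isOpen_compl.mem_nhds (by simp [hp]))
        filter_upwards [hmem, self_mem_nhdsWithin] with y hy hyU
        rcases hyU with rfl | hyU
        · rw [hφp]; exact hb
        · obtain ⟨i, hi⟩ := mem_iUnion.1 hyU
          have hki : k ≤ i := by
            by_contra hlt'
            exact hy (mem_iUnion₂.2 ⟨i, by simpa using hlt', hi⟩)
          exact hk.trans_le ((psum_mono a hki).trans (hge i y hi))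
      · filter_upwards [self_mem_nhdsWithin] with y hyU
        rcases hyU with rfl | hyU
        · rw [hφp]; exact hb
        · obtain ⟨i, hi⟩ := mem_iUnion.1 hyU
          exact (hltS i y hi).trans hb
    · obtain ⟨i, hi⟩ := mem_iUnion.1 hx
      have hn : V i ∈ 𝓝 x := (hV i).2.mem_nhds hi
      have h1 : ContinuousAt (fun y => psum a i + f i y) x :=
        (Ordinal.isNormal_add_right (psum a i)).continuous.continuousAt.comp
          ((hfc i).continuousAt hn)
      refine (h1.congr ?_).continuousWithinAt
      filter_upwards [hn] with y hy using (hφV i y hy).symm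
  · rintro x (rfl | hx) y (rfl | hy) hxy
    · rfl
    · obtain ⟨i, hi⟩ := mem_iUnion.1 hy
      exact absurd (hltS i y hi) (by rw [← hxy, hφp]; exact lt_irrefl _)
    · obtain ⟨i, hi⟩ := mem_iUnion.1 hx
      exact absurd (hltS i x hi) (by rw [hxy, hφp]; exact lt_irrefl _)
    · obtain ⟨i, hi⟩ := mem_iUnion.1 hx
      obtain ⟨j, hj⟩ := mem_iUnion.1 hy
      rcases lt_trichotomy i j with h | rfl | h
      · exact absurd hxy (hord i j h x hi y hj).ne
      · rw [hφV i x hi, hφV i y hj] at hxy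
        exact hfi i hi hj (add_left_cancel hxy)
      · exact absurd hxy (hord j i h y hj x hi).ne'
  · ext z
    rw [mem_Iio, Order.lt_add_one_iff]
    constructor
    · rintro ⟨x, rfl | hx, rfl⟩
      · exact hφp.le
      · obtain ⟨i, hi⟩ := mem_iUnion.1 hx
        exact (hltS i x hi).le
    · intro hz
      rcases hz.eq_or_lt with rfl | hz
      · exact ⟨p, Or.inl rfl, hφp⟩
      · have hex : ∃ k, z < psum a k := Ordinal.lt_iSup_iff.1 hz
        obtain ⟨j, hj⟩ : ∃ j, Nat.find hex = j + 1 := by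
          refine Nat.exists_eq_succ_of_ne_zero fun h0 => ?_
          have := Nat.find_spec hex
          rw [h0] at this
          simp [psum] at this
        have h1 : z < psum a j + a j := by
          have := Nat.find_spec hex
          rwa [hj] at this
        have h2 : psum a j ≤ z := not_lt.1 (Nat.find_min hex (by omega))
        have h3 : z - psum a j ∈ f j '' V j := by
          rw [hfe]
          exact (Ordinal.sub_lt_of_le h2).2 h1
        obtain ⟨x, hx, hxz⟩ := h3
        exact ⟨x, Or.inr (mem_iUnion.2 ⟨j, hx⟩),
          by rw [hφV j x hx, hxz, Ordinal.add_sub_cancel_of_le h2]⟩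

open scoped Ordinal in
/-- Partial sums of ordinals below `ω ^ γ` reach `ω ^ γ` when, for each `δ < γ`, infinitely many
terms are at least `ω ^ δ`. -/
theorem iSup_psum {a : ℕ → Ordinal.{u}} {γ : Ordinal.{u}} (hγ : γ ≠ 0) (hlt : ∀ i, a i < ω ^ γ)
    (hinf : ∀ δ < γ, ∀ k, ∃ i, k ≤ i ∧ ω ^ δ ≤ a i) : ⨆ k, psum a k = ω ^ γ := by
  apply le_antisymm
  · refine Ordinal.iSup_le fun k => le_of_lt ?_
    induction k with
    | zero => exact Ordinal.opow_pos _ Ordinal.omega0_pos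
    | succ k ih => exact Ordinal.isPrincipal_add_omega0_opow γ ih (hlt k)
  · refine le_of_forall_lt fun b hb => ?_
    obtain ⟨δ, hδ, n, hn⟩ := (Ordinal.lt_omega0_opow hγ).1 hb
    have key : ∀ n : ℕ, ∃ k, ω ^ δ * n ≤ psum a k := by
      intro n
      induction n with
      | zero => exact ⟨0, by simp [psum]⟩
      | succ n ih =>
        obtain ⟨k, hk⟩ := ih
        obtain ⟨i, hi, hai⟩ := hinf δ hδ k
        refine ⟨i + 1, ?_⟩
        rw [Nat.cast_add_one, mul_add_one]
        exact add_le_add (hk.trans (psum_mono a hi)) hai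
    obtain ⟨k, hk⟩ := key n
    exact (hn.trans_le hk).trans_le (le_ciSup Ordinal.bddAbove_of_small k)

open scoped Ordinal in
/-- The order type of the chart of a clopen set whose last derivative, of index `γ`, is a single
point. For `γ = 0` this is `1` rather than `ω ^ 0 + 1 = 2`. -/
def blk (γ : Ordinal.{u}) : Ordinal.{u} := if γ = 0 then 1 else ω ^ γ + 1

open scoped Ordinal in
theorem opow_le_blk (γ : Ordinal.{u}) : ω ^ γ ≤ blk γ := by
  unfold blk
  split_ifs with h
  · simp [h]
  · exact le_self_add

open scoped Ordinal in
theorem blk_mul_lt {γ δ : Ordinal.{u}} (h : γ < δ) (n : ℕ) : blk γ * n < ω ^ δ := by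
  refine Ordinal.mul_lt_omega0_opow (bot_le.trans_lt h) ?_ (Ordinal.natCast_lt_omega0 n)
  have h1 : ω ^ γ < ω ^ δ := (Ordinal.opow_lt_opow_iff_right Ordinal.one_lt_omega0).2 h
  have h2 : (1 : Ordinal) < ω ^ δ :=
    (Order.one_le_iff_pos.2 (Ordinal.opow_pos _ Ordinal.omega0_pos)).trans_lt h1
  unfold blk
  split_ifs
  · exact h2
  · exact Ordinal.isPrincipal_add_omega0_opow δ h1 h2

open scoped Ordinal in
theorem blk_mul {γ : Ordinal.{u}} (hγ : γ ≠ 0) {n : ℕ} (hn : n ≠ 0) :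
    blk γ * n = ω ^ γ * n + 1 := by
  rw [blk, if_neg hγ]
  induction n with
  | zero => exact absurd rfl hn
  | succ n ih =>
    rcases eq_or_ne n 0 with rfl | h0
    · simp
    · rw [Nat.cast_add_one, mul_add_one, ih h0, mul_add_one, add_assoc, ← add_assoc 1,
        Ordinal.one_add_of_omega0_le (Ordinal.left_le_opow _ (pos_iff_ne_zero.2 hγ)), add_assoc]

theorem exists_isClopen_sep [CompactSpace X] [T2Space X] [Countable X] {U s : Set X} {x : X}
    (hU : IsClopen U) (hs : IsClosed s) (hxU : x ∈ U) (hxs : x ∉ s) :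
    ∃ W, IsClopen W ∧ x ∈ W ∧ W ⊆ U ∧ Disjoint W s := by
  obtain ⟨W, hW, hxW, hWs⟩ := compact_exists_isClopen_in_isOpen (hU.2.sdiff hs) ⟨hxU, hxs⟩
  exact ⟨W, hW, hxW, fun y hy => (hWs hy).1, disjoint_left.2 fun y hy => (hWs hy).2⟩

open scoped Ordinal in
/-- The Mazurkiewicz–Sierpiński classification, for clopen subsets of a fixed countable compact
space. -/
theorem ordChart_of_rank [CompactSpace X] [T2Space X] [Countable X] (γ : Ordinal.{u}) :
    ∀ (n : ℕ) (U : Set X), IsClopen U → (U ∩ CB X γ).Finite → (U ∩ CB X γ).ncard = n → n ≠ 0 →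
      OrdChart U (blk γ * n) := by
  classical
  induction γ using WellFoundedLT.induction with
  | ind γ ih =>
    -- clopen sets of smaller rank
    have piece : ∀ W : Set X, IsClopen W → W ∩ CB X γ = ∅ →
        ∃ a < ω ^ γ, (∀ δ, (W ∩ CB X δ).Nonempty → ω ^ δ ≤ a) ∧ OrdChart W a := by
      intro W hW hWe
      rcases W.eq_empty_or_nonempty with rfl | hne
      · exact ⟨0, Ordinal.opow_pos _ Ordinal.omega0_pos, by simp, ordChart_empty⟩
      · obtain ⟨ρ, h1, h2, h3⟩ := exists_rank.{u} hW.1 hne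
        have hρ : ρ < γ := by
          by_contra hle
          obtain ⟨x, hx⟩ := h1
          have : x ∈ W ∩ CB X γ := ⟨hx.1, CB_anti (not_lt.1 hle) hx.2⟩
          rw [hWe] at this
          exact this
        have hn : (W ∩ CB X ρ).ncard ≠ 0 := (ncard_pos h2).2 h1 |>.ne'
        refine ⟨_, blk_mul_lt hρ _, fun δ hδ => ?_, ih ρ hρ _ W hW h2 rfl hn⟩
        have hδρ : δ ≤ ρ := by
          by_contra hlt
          obtain ⟨x, hx⟩ := hδ
          have : x ∈ W ∩ CB X (ρ + 1) :=
            ⟨hx.1, CB_anti (Order.add_one_le_of_lt (not_le.1 hlt)) hx.2⟩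
          rw [h3] at this
          exact this
        calc ω ^ δ ≤ ω ^ ρ := Ordinal.opow_le_opow_right Ordinal.omega0_pos hδρ
          _ ≤ blk ρ := opow_le_blk ρ
          _ ≤ _ := Ordinal.le_mul_left _ (by exact_mod_cast Nat.pos_of_ne_zero hn)
    have single : ∀ (U : Set X) (p : X), IsClopen U → U ∩ CB X γ = {p} → OrdChart U (blk γ) := by
      intro U p hU hUp
      have hp : p ∈ U ∩ CB X γ := hUp ▸ rfl
      have : Nonempty X := ⟨p⟩
      obtain ⟨e, he⟩ := exists_surjective_nat X
      have hW : ∀ i, ∃ W, IsClopen W ∧ W ⊆ U ∧ p ∉ W ∧ (e i ∈ U → e i ≠ p → e i ∈ W) := by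
        intro i
        by_cases h : e i ∈ U ∧ e i ≠ p
        · obtain ⟨W, h1, h2, h3, h4⟩ := exists_isClopen_sep hU (isClosed_singleton (x := p)) h.1 h.2
          exact ⟨W, h1, h3, disjoint_singleton_right.1 h4, fun _ _ => h2⟩
        · exact ⟨∅, isClopen_empty, by simp, by simp, fun h1 h2 => (h ⟨h1, h2⟩).elim⟩
      choose W hWc hWU hpW hWe using hW
      have hVc : ∀ i, IsClopen (disjointed W i) := fun i =>
        disjointedRec (fun _ _ h => h.diff (hWc _)) (hWc i)
      have hVW : ∀ i, disjointed W i ⊆ W i := fun i => disjointed_subset W i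
      have hUeq : U = {p} ∪ ⋃ i, disjointed W i := by
        rw [iUnion_disjointed]
        ext x
        constructor
        · intro hx
          by_cases hxp : x = p
          · exact Or.inl hxp
          · obtain ⟨i, rfl⟩ := he x
            exact Or.inr (mem_iUnion.2 ⟨i, hWe i hx hxp⟩)
        · rintro (rfl | hx)
          · exact hp.1
          · obtain ⟨i, hi⟩ := mem_iUnion.1 hx
            exact hWU i hi
      have hVe : ∀ i, disjointed W i ∩ CB X γ = ∅ := by
        intro i
        rw [eq_empty_iff_forall_notMem]
        rintro x ⟨hx1, hx2⟩
        have : x ∈ U ∩ CB X γ := ⟨hWU i (hVW i hx1), hx2⟩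
        rw [hUp] at this
        exact hpW i (mem_singleton_iff.1 this ▸ hVW i hx1)
      choose a ha hac hchart using fun i => piece _ (hVc i) (hVe i)
      have hmain := OrdChart.iUnion (p := p) hVc (fun i j hij => disjoint_disjointed W hij)
        (fun i h => hpW i (hVW i h)) hchart
      rw [← hUeq] at hmain
      suffices h : (⨆ k, psum a k) + 1 = blk γ by rwa [h] at hmain
      rcases eq_or_ne γ 0 with rfl | hγ
      · have h0 : ∀ k, psum a k = 0 := by
          intro k
          induction k with
          | zero => rfl
          | succ k ih =>
            have := ha k
            rw [Ordinal.opow_zero, Order.lt_one_iff] at this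
            simp [psum, ih, this]
        simp [h0, blk]
      · rw [blk, if_neg hγ, iSup_psum hγ ha]
        intro δ hδ k
        -- otherwise `p` would be isolated in the `δ`-th derivative
        by_contra hcon
        push Not at hcon
        have hcl : IsClosed (⋃ i ∈ Finset.range k, disjointed W i) :=
          isClosed_biUnion_finset fun i _ => (hVc i).1
        have hpn : p ∉ ⋃ i ∈ Finset.range k, disjointed W i := by
          intro h
          obtain ⟨i, -, hi⟩ := mem_iUnion₂.1 h
          exact hpW i (hVW i hi)
        obtain ⟨x, ⟨⟨hxU, hx⟩, hxD⟩, hne⟩ := accPt_iff_nhds.1 (accPt_of_mem_CB hp.2 hδ) _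
          (inter_mem (hU.2.mem_nhds hp.1) (hcl.isOpen_compl.mem_nhds hpn))
        rw [hUeq] at hxU
        rcases hxU with rfl | hxU
        · exact hne rfl
        · obtain ⟨i, hi⟩ := mem_iUnion.1 hxU
          have hki : k ≤ i := by
            by_contra hlt'
            exact hx (mem_iUnion₂.2 ⟨i, by simpa using hlt', hi⟩)
          exact absurd (hac i δ ⟨x, hi, hxD⟩) (not_le.2 (hcon i hki))
    intro n
    induction n with
    | zero => exact fun _ _ _ _ h => absurd rfl h
    | succ n ihn =>
      intro U hU hfin hcard _
      rcases eq_or_ne n 0 with rfl | hn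
      · obtain ⟨p, hp⟩ := ncard_eq_one.1 hcard
        simpa using single U p hU hp
      · obtain ⟨p, hp⟩ : (U ∩ CB X γ).Nonempty := by
          rw [← ncard_pos hfin, hcard]; omega
        obtain ⟨W, hW, hpW, hWU, hWd⟩ := exists_isClopen_sep (s := (U ∩ CB X γ) \ {p}) hU
          (hfin.subset sdiff_subset).isClosed hp.1 (by simp)
        have h1 : W ∩ CB X γ = {p} := by
          ext x
          constructor
          · rintro ⟨hx1, hx2⟩
            by_contra hne
            exact disjoint_left.1 hWd hx1 ⟨⟨hWU hx1, hx2⟩, hne⟩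
          · rintro rfl
            exact ⟨hpW, hp.2⟩
        have h2 : (U \ W) ∩ CB X γ = (U ∩ CB X γ) \ {p} := by
          ext x
          constructor
          · rintro ⟨⟨hx1, hx2⟩, hx3⟩
            exact ⟨⟨hx1, hx3⟩, fun h => hx2 (mem_singleton_iff.1 h ▸ hpW)⟩
          · rintro ⟨⟨hx1, hx2⟩, hx3⟩
            exact ⟨⟨hx1, fun h => disjoint_left.1 hWd h ⟨⟨hx1, hx2⟩, hx3⟩⟩, hx2⟩
        have h3 := ihn (U \ W) (hU.diff hW) (h2 ▸ hfin.subset sdiff_subset)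
          (by rw [h2, ncard_sdiff_singleton_of_mem hp, hcard]; rfl) hn
        have h4 := h3.union (hU.diff hW).2 hW.2 disjoint_sdiff_self_left (single W p hW h1)
        rwa [sdiff_union_of_subset hWU, ← mul_add_one, ← Nat.cast_add_one] at h4

end Charts

/-! ### Homeomorphism type and successor rank -/

section Classification

variable {X : Type*} [TopologicalSpace X]

open scoped Ordinal in
theorem homeoOrd_of_CB [CompactSpace X] [T2Space X] [Countable X] {γ : Ordinal.{u}} (hγ : γ ≠ 0)
    (hfin : (CB X γ).Finite) (hne : (CB X γ).Nonempty) :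
    HomeoOrd X (ω ^ γ * ((CB X γ).ncard : Ordinal.{u})) := by
  have hn : (CB X γ).ncard ≠ 0 := ((ncard_pos hfin).2 hne).ne'
  obtain ⟨h, hc, hi, he⟩ := ordChart_of_rank γ _ (univ : Set X) isClopen_univ
    (by rwa [univ_inter]) rfl (by rwa [univ_inter])
  rw [univ_inter, blk_mul hγ hn] at he
  set o := ω ^ γ * ((CB X γ).ncard : Ordinal.{u})
  rw [image_univ] at he
  have hmem : ∀ x, h x ∈ Iic o := fun x => by
    have : h x ∈ Iio (o + 1) := he ▸ mem_range_self x
    exact Order.lt_add_one_iff.1 (mem_Iio.1 this)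
  have hcont : Continuous (fun x => (⟨h x, hmem x⟩ : Iic o)) :=
    (continuousOn_univ.1 hc).subtype_mk hmem
  have hbij : Function.Bijective (fun x => (⟨h x, hmem x⟩ : Iic o)) := by
    refine ⟨fun x y hxy => hi trivial trivial (congrArg Subtype.val hxy), fun z => ?_⟩
    have : z.1 ∈ range h := he ▸ mem_Iio.2 (Order.lt_add_one_iff.2 z.2)
    obtain ⟨x, hx⟩ := this
    exact ⟨x, Subtype.ext hx⟩
  let e₁ : X ≃ₜ Iic o := Continuous.homeoOfEquivCompactToT2 (f := Equiv.ofBijective _ hbij) hcont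
  -- `OrdSpace o` carries the order topology, which on the order-convex set `Iic o` is induced
  let e₂ : Iic o ≃o OrdSpace o := OrderIso.refl _
  exact ⟨e₁.trans e₂.toHomeomorph⟩

/-- If the last derivative has limit index, every neighbourhood of it contains an infinite earlier
derivative. -/
theorem exists_infinite_CB_subset [CompactSpace X] [T2Space X] {γ : Ordinal.{u}}
    (hlim : Order.IsSuccLimit γ) (hne : (CB X γ).Nonempty) {V : Set X} (hV : IsOpen V)
    (hsub : CB X γ ⊆ V) : ∃ δ < γ, (CB X δ).Infinite ∧ CB X δ ⊆ V := by
  have : Nonempty (Iio γ) := ⟨⟨0, by simpa using hlim.bot_lt⟩⟩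
  obtain ⟨δ, hδ⟩ := exists_subset_nhds_of_isCompact (V := fun δ : Iio γ => CB X δ.1)
    (fun a b => by
      rcases le_total a b with h | h
      · exact ⟨b, CB_anti h, subset_rfl⟩
      · exact ⟨a, subset_rfl, CB_anti h⟩)
    (fun δ => (isClosed_CB _).isCompact) (U := V) (fun x hx => by
      refine hV.mem_nhds (hsub (mem_CB.2 fun δ hδ => ?_))
      exact accPt_of_mem_CB (mem_iInter.1 hx ⟨δ + 1, hlim.add_one_lt hδ⟩)
        (Order.lt_add_one_iff.2 le_rfl))
  obtain ⟨x, hx⟩ := hne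
  exact ⟨δ, δ.2, fun h => not_accPt_of_finite h x (accPt_of_mem_CB hx δ.2), hδ⟩

/-- The last derivative has successor index provided infinite derivatives cannot accumulate on it
alone. -/
theorem exists_succ_rank [CompactSpace X] [T2Space X] [Countable X] [Infinite X]
    (hdyn : ∀ γ : Ordinal.{u}, (CB X γ).Finite → ∃ V, IsOpen V ∧ CB X γ ⊆ V ∧
      ∀ δ < γ, CB X δ ⊆ V → (CB X δ).Finite) :
    ∃ γ : Ordinal.{u}, (CB X (γ + 1)).Nonempty ∧ (CB X (γ + 1)).Finite ∧
      CB X (γ + 1 + 1) = ∅ := by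
  obtain ⟨ρ, h1, h2, h3⟩ := exists_rank.{u} (isClosed_univ (X := X)) univ_nonempty
  rw [univ_inter] at h1 h2 h3
  rcases Ordinal.zero_or_succ_or_isSuccLimit ρ with rfl | ⟨γ, rfl⟩ | hlim
  · rw [CB_zero] at h2
    exact absurd h2 infinite_univ
  · exact ⟨γ, h1, h2, h3⟩
  · obtain ⟨V, hV, hsub, hfin⟩ := hdyn ρ h2
    obtain ⟨δ, hδ, hinf, hδV⟩ := exists_infinite_CB_subset hlim h1 hV hsub
    exact absurd (hfin δ hδ hδV) hinf

end Classification

/-! ### Dynamics on the omega-limit set and on the inverse limit -/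

section Dynamics

variable {f : unitI → unitI} {c : unitI}

theorem isClosed_omegaLimitSet : IsClosed (omegaLimitSet f c) :=
  isClosed_iInter fun _ => isClosed_closure

theorem mapsTo_omegaLimitSet (hf : Continuous f) :
    MapsTo f (omegaLimitSet f c) (omegaLimitSet f c) := by
  intro x hx
  refine mem_iInter.2 fun n => ?_
  refine map_mem_closure hf (mem_iInter.1 hx n) ?_
  rintro y ⟨m, hm, rfl⟩
  exact ⟨m + 1, by omega, Function.iterate_succ_apply' f m c⟩

theorem surjOn_omegaLimitSet (hf : Continuous f) :
    SurjOn f (omegaLimitSet f c) (omegaLimitSet f c) := by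
  intro y hy
  set t : ℕ → Set unitI := fun n => closure {z | ∃ m, n ≤ m ∧ f^[m] c = z}
  have hne : (⋂ n, t n ∩ f ⁻¹' {y}).Nonempty := by
    apply IsCompact.nonempty_iInter_of_sequence_nonempty_isCompact_isClosed
    · intro n
      refine inter_subset_inter_left _ (closure_mono ?_)
      rintro z ⟨m, hm, rfl⟩
      exact ⟨m, by omega, rfl⟩
    · intro n
      have h1 : y ∈ f '' t n := by
        have hcl : IsClosed (f '' t n) := (isClosed_closure.isCompact.image hf).isClosed
        refine closure_minimal ?_ hcl (mem_iInter.1 hy (n + 1))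
        rintro z ⟨m, hm, rfl⟩
        refine ⟨f^[m - 1] c, subset_closure ⟨m - 1, by omega, rfl⟩, ?_⟩
        rw [← Function.iterate_succ_apply' f]
        congr 2
        omega
      obtain ⟨x, hx, hxy⟩ := h1
      exact ⟨x, hx, hxy⟩
    · exact (isClosed_closure.inter (isClosed_singleton.preimage hf)).isCompact
    · exact fun n => isClosed_closure.inter (isClosed_singleton.preimage hf)
  obtain ⟨x, hx⟩ := hne
  have hx' := fun n => mem_iInter.1 hx n
  exact ⟨x, mem_iInter.2 fun n => (hx' n).1, (hx' 0).2⟩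

/-- If `c` were in its own countable omega-limit set, its orbit would visit an isolated point
infinitely often, so it would be eventually periodic. -/
theorem critical_notMem (hf : Continuous f) (hcount : (omegaLimitSet f c).Countable)
    (hinf : (omegaLimitSet f c).Infinite) : c ∉ omegaLimitSet f c := by
  intro hc
  have hcomp := isCompact_iff_compactSpace.1 (isClosed_omegaLimitSet (f := f) (c := c)).isCompact
  have := hcount.to_subtype
  have horb : ∀ m, f^[m] c ∈ omegaLimitSet f c := fun m => (mapsTo_omegaLimitSet hf).iterate m hc
  obtain ⟨z, -, hz⟩ := exists_not_accPt (X := omegaLimitSet f c) isClosed_univ ⟨⟨c, hc⟩, trivial⟩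
  rw [accPt_iff_nhds] at hz
  push Not at hz
  obtain ⟨N, hN, hNz⟩ := hz
  obtain ⟨O, hO, hON⟩ := mem_nhds_induced _ _ _ |>.1 hN
  have hvisit : ∀ n, ∃ m, n ≤ m ∧ f^[m] c = z := by
    intro n
    obtain ⟨y, hyO, m, hm, rfl⟩ := mem_closure_iff_nhds.1 (mem_iInter.1 z.2 n) O hO
    exact ⟨m, hm, congrArg Subtype.val (hNz ⟨_, horb m⟩ ⟨hON hyO, trivial⟩)⟩
  obtain ⟨m, -, hm⟩ := hvisit 0
  obtain ⟨k, hk, hkz⟩ := hvisit (m + 1)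
  have hper : ∀ j, ∃ i, i < k ∧ f^[j] c = f^[i] c := by
    intro j
    induction j with
    | zero => exact ⟨0, by omega, rfl⟩
    | succ j ih =>
      obtain ⟨i, hi, hji⟩ := ih
      rcases Nat.lt_or_ge (i + 1) k with h | h
      · exact ⟨i + 1, h, by rw [Function.iterate_succ_apply', hji, Function.iterate_succ_apply']⟩
      · refine ⟨m, by omega, ?_⟩
        rw [Function.iterate_succ_apply', hji, ← Function.iterate_succ_apply' f,
          show i.succ = k by omega, hkz, hm]
  have hfin : ((fun i => f^[i] c) '' Iio k).Finite := (finite_Iio k).image _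
  refine hinf (hfin.subset ?_)
  refine (iInter_subset _ 0).trans (closure_minimal ?_ hfin.isClosed)
  rintro y ⟨j, -, rfl⟩
  obtain ⟨i, hi, hji⟩ := hper j
  exact ⟨i, hi, hji.symm⟩

/-- Distinct points whose orbits avoid `c` have distinct itineraries: otherwise `c` would never enter
the iterated images of the interval they span, contradicting `LEO`. -/
theorem eq_of_itinerary (hf : Unimodal f c) (hleo : LEO f) {x y : unitI}
    (hx : ∀ k, f^[k] x ≠ c) (hy : ∀ k, f^[k] y ≠ c)
    (hxy : ∀ k, f^[k] x < c ↔ f^[k] y < c) : x = y := by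
  obtain ⟨hcont, -, -, hmono, hanti⟩ := hf
  wlog hlt : x < y generalizing x y
  · by_contra hne
    rcases lt_or_gt_of_ne hne with h | h
    · exact hne (this hx hy hxy h)
    · exact hne (this hy hx (fun k => (hxy k).symm) h).symm
  exfalso
  have hside : ∀ k, (f^[k] x < c ∧ f^[k] y < c) ∨ (c < f^[k] x ∧ c < f^[k] y) := by
    intro k
    by_cases h : f^[k] x < c
    · exact Or.inl ⟨h, (hxy k).1 h⟩
    · exact Or.inr ⟨lt_of_le_of_ne (not_lt.1 h) (hx k).symm,
        lt_of_le_of_ne (not_lt.1 fun h' => h ((hxy k).2 h')) (hy k).symm⟩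
  have himg : ∀ k, ∀ z ∈ uIcc x y, f^[k] z ∈ uIcc (f^[k] x) (f^[k] y) := by
    intro k z hz
    induction k with
    | zero => exact hz
    | succ k ih =>
      rw [Function.iterate_succ_apply', Function.iterate_succ_apply', Function.iterate_succ_apply']
      rcases hside k with ⟨h1, h2⟩ | ⟨h1, h2⟩
      · have : MonotoneOn f (uIcc (f^[k] x) (f^[k] y)) :=
          hmono.monotoneOn.mono fun w hw => hw.2.trans (sup_le h1.le h2.le)
        exact this.mapsTo_uIcc ih
      · have : AntitoneOn f (uIcc (f^[k] x) (f^[k] y)) :=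
          hanti.antitoneOn.mono fun w hw => (le_inf h1.le h2.le).trans hw.1
        exact this.mapsTo_uIcc ih
  obtain ⟨z, hz⟩ := exists_between hlt
  obtain ⟨ε, hε, hball⟩ := Metric.isOpen_iff.1 (isOpen_Ioo (a := x) (b := y)) z hz
  obtain ⟨N, hN⟩ := hleo ε hε z
  obtain ⟨w, hw, hwc⟩ : c ∈ f^[N] '' Metric.ball z ε := hN ▸ mem_univ c
  have hwI : w ∈ uIcc x y := by
    rw [uIcc_of_le hlt.le]; exact Ioo_subset_Icc_self (hball hw)
  have := himg N w hwI
  rw [hwc] at this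
  rcases hside N with ⟨h1, h2⟩ | ⟨h1, h2⟩
  · exact absurd (this.2.trans_lt (sup_lt_iff.2 ⟨h1, h2⟩)) (lt_irrefl _)
  · exact absurd ((lt_inf_iff.2 ⟨h1, h2⟩).trans_le this.1) (lt_irrefl _)

/-- A finite invariant set is isolated as an invariant set: points that stay near it share the
itinerary of one of its points. -/
theorem exists_isolating (hf : Unimodal f c) (hleo : LEO f) {K P : Set unitI} (hc : c ∉ K)
    (hK : MapsTo f K K) (hPK : P ⊆ K) (hfin : P.Finite) (hP : MapsTo f P P) :
    ∃ V, IsOpen V ∧ P ⊆ V ∧ ∀ A ⊆ K, MapsTo f A A → A ⊆ V → A ⊆ P := by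
  classical
  obtain ⟨U, hU, hUd⟩ := hfin.t2_separation
  set side : unitI → Set unitI := fun p => if p < c then Iio c else Ioi c with hside
  have hsideo : ∀ p, IsOpen (side p) := fun p => by
    simp only [hside]; split_ifs
    · exact isOpen_Iio
    · exact isOpen_Ioi
  have hsidem : ∀ p ∈ K, p ∈ side p := fun p hp => by
    simp only [hside]; split_ifs with h
    · exact h
    · exact lt_of_le_of_ne (not_lt.1 h) fun h' => hc (h' ▸ hp)
  have hsidei : ∀ p q, q ∈ side p → (q < c ↔ p < c) := fun p q hq => by
    simp only [hside] at hq
    split_ifs at hq with h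
    · exact ⟨fun _ => h, fun _ => hq⟩
    · exact ⟨fun h' => absurd (h'.trans hq) (lt_irrefl _), fun h' => absurd h' h⟩
  set W : unitI → Set unitI := fun p => U p ∩ f ⁻¹' U (f p) ∩ side p
  refine ⟨⋃ p ∈ P, W p, isOpen_biUnion fun p _ =>
    ((hU p).2.inter ((hU _).2.preimage hf.1)).inter (hsideo p), fun p hp => ?_, ?_⟩
  · exact mem_iUnion₂.2 ⟨p, hp, ⟨(hU p).1, (hU _).1⟩, hsidem p (hPK hp)⟩
  · intro A hAK hA hAV y hy
    obtain ⟨p, hp, hyp⟩ := mem_iUnion₂.1 (hAV hy)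
    have key : ∀ k, f^[k] y ∈ W (f^[k] p) := by
      intro k
      induction k with
      | zero => exact hyp
      | succ k ih =>
        have h1 : f^[k + 1] y ∈ U (f^[k + 1] p) := by
          rw [Function.iterate_succ_apply', Function.iterate_succ_apply']
          exact ih.1.2
        obtain ⟨q, hq, hyq⟩ := mem_iUnion₂.1 (hAV (hA.iterate (k + 1) hy))
        have : q = f^[k + 1] p := by
          by_contra hne
          exact disjoint_left.1 (hUd hq (hP.iterate (k + 1) hp) hne) hyq.1.1 h1
        exact this ▸ hyq
    have : y = p := eq_of_itinerary hf hleo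
      (fun k h => hc (h ▸ hK.iterate k (hAK hy))) (fun k h => hc (h ▸ hK.iterate k (hPK hp)))
      (fun k => hsidei _ _ (key k).2)
    exact this ▸ hp

theorem exists_injOn_nhds (hf : Unimodal f c) {x : unitI} (hx : x ≠ c) :
    ∃ U ∈ 𝓝 x, InjOn f U := by
  rcases lt_or_gt_of_ne hx with h | h
  · exact ⟨Iio c, Iio_mem_nhds h, hf.2.2.2.1.injOn.mono fun _ hy => (mem_Iio.1 hy).le⟩
  · exact ⟨Ioi c, Ioi_mem_nhds h, hf.2.2.2.2.injOn.mono fun _ hy => (mem_Ioi.1 hy).le⟩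

/-- The `n`-th coordinate of an inhomogeneity. -/
def coord (n : ℕ) (y : Inhom f c) : unitI := y.1.1 n

theorem coord_mem (n : ℕ) (y : Inhom f c) : coord n y ∈ omegaLimitSet f c := y.2 n

theorem map_coord (n : ℕ) (y : Inhom f c) : f (coord (n + 1) y) = coord n y := y.1.2 n

theorem continuous_coord (n : ℕ) : Continuous (coord n : Inhom f c → unitI) :=
  (continuous_apply n).comp (continuous_subtype_val.comp continuous_subtype_val)

theorem Inhom_ext {y z : Inhom f c} (h : ∀ n, coord n y = coord n z) : y = z :=
  Subtype.ext (Subtype.ext (funext h))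

/-- The shift dropping the first coordinate. -/
def dropShift (y : Inhom f c) : Inhom f c :=
  ⟨⟨fun n => coord (n + 1) y, fun n => map_coord (n + 1) y⟩, fun n => coord_mem (n + 1) y⟩

/-- The inverse shift `(x₀, x₁, …) ↦ (f x₀, x₀, x₁, …)`, written as coordinatewise application
of `f`. -/
def pushShift (hf : Continuous f) (y : Inhom f c) : Inhom f c :=
  ⟨⟨fun n => f (coord n y), fun n => congrArg f (map_coord n y)⟩,
    fun n => mapsTo_omegaLimitSet hf (coord_mem n y)⟩

theorem continuous_dropShift : Continuous (dropShift : Inhom f c → Inhom f c) :=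
  ((continuous_pi fun n => continuous_coord (n + 1)).subtype_mk _).subtype_mk _

theorem continuous_pushShift (hf : Continuous f) :
    Continuous (pushShift hf : Inhom f c → Inhom f c) :=
  ((continuous_pi fun n => hf.comp (continuous_coord n)).subtype_mk _).subtype_mk _

theorem push_drop (hf : Continuous f) (y : Inhom f c) : pushShift hf (dropShift y) = y :=
  Inhom_ext fun n => map_coord n y

theorem drop_push (hf : Continuous f) (y : Inhom f c) : dropShift (pushShift hf y) = y :=
  Inhom_ext fun n => map_coord n y

theorem compactSpace_Inhom (hf : Continuous f) : CompactSpace (Inhom f c) := by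
  have h1 : IsClosed (InvLim f) := by
    have : InvLim f = ⋂ i, {x : ℕ → unitI | f (x (i + 1)) = x i} := by
      ext x; simp [InvLim]
    rw [this]
    exact isClosed_iInter fun i =>
      isClosed_eq (hf.comp (continuous_apply (i + 1))) (continuous_apply i)
  have h2 : IsClosed (Inhom f c) := by
    have : Inhom f c = ⋂ n, {x : InvLim f | (x : ℕ → unitI) n ∈ omegaLimitSet f c} := by
      ext x; simp [Inhom]
    rw [this]
    exact isClosed_iInter fun n =>
      isClosed_omegaLimitSet.preimage ((continuous_apply n).comp continuous_subtype_val)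
  have := isCompact_iff_compactSpace.1 h1.isCompact
  exact isCompact_iff_compactSpace.1 h2.isCompact

theorem exists_coord_zero (hf : Continuous f) {x : unitI} (hx : x ∈ omegaLimitSet f c) :
    ∃ y : Inhom f c, coord 0 y = x := by
  choose! g hg hfg using surjOn_omegaLimitSet (f := f) (c := c) hf
  have hgm : MapsTo g (omegaLimitSet f c) (omegaLimitSet f c) := hg
  refine ⟨⟨⟨fun n => g^[n] x, fun n => ?_⟩, fun n => hgm.iterate n hx⟩, rfl⟩
  change f (g^[n + 1] x) = g^[n] x
  rw [Function.iterate_succ_apply', hfg (hgm.iterate n hx)]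

/-- `f` permutes a finite set that it maps onto itself, so threads in such a set are determined by
their first coordinate. -/
theorem finite_threads {P : Set unitI} (hfin : P.Finite) (hP : f '' P = P) :
    {y : Inhom f c | ∀ n, coord n y ∈ P}.Finite := by
  have hinj : InjOn f P := injOn_of_ncard_image_eq (by rw [hP]) hfin
  refine Finite.of_finite_image (f := coord 0) (hfin.subset ?_) ?_
  · rintro _ ⟨y, hy, rfl⟩
    exact hy 0
  · intro y hy z hz h0
    refine Inhom_ext fun n => ?_
    induction n with
    | zero => exact h0
    | succ n ih => exact hinj (hy _) (hz _) ((map_coord n y).trans (ih.trans (map_coord n z).symm))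

end Dynamics

/-! ### The classification of both spaces -/

theorem stmt0 (f : unitI → unitI) (c : unitI)
    (hf : Unimodal f c) (hleo : LEO f)
    (hcount : (Inhom f c).Countable) (hinf : (Inhom f c).Infinite) :
    ∃ (α β : Ordinal) (n m : ℕ),
      α.card ≤ Cardinal.aleph0 ∧ β.card ≤ Cardinal.aleph0 ∧ α ≤ β ∧
      0 < n ∧ 0 < m ∧
      HomeoOrd (omegaLimitSet f c) (Ordinal.omega0 ^ (α + 1) * n) ∧
      HomeoOrd (Inhom f c) (Ordinal.omega0 ^ (β + 1) * m) := by
  have hfc := hf.1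
  have hmaps := mapsTo_omegaLimitSet (c := c) hfc
  have hcY := compactSpace_Inhom (c := c) hfc
  have hcX := isCompact_iff_compactSpace.1 (isClosed_omegaLimitSet (f := f) (c := c)).isCompact
  have hYc : Countable (Inhom f c) := hcount.to_subtype
  have hYi : Infinite (Inhom f c) := hinf.to_subtype
  let p : Inhom f c → omegaLimitSet f c := fun y => ⟨coord 0 y, coord_mem 0 y⟩
  have hpc : Continuous p := (continuous_coord 0).subtype_mk _
  have hps : Function.Surjective p := fun x => by
    obtain ⟨y, hy⟩ := exists_coord_zero hfc x.2
    exact ⟨y, Subtype.ext hy⟩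
  have hXc : Countable (omegaLimitSet f c) := hps.countable
  have hXinf : (omegaLimitSet f c).Infinite := by
    intro hfin
    have h1 := finite_threads (c := c) hfin ((surjOn_omegaLimitSet hfc).image_eq_of_mapsTo hmaps)
    have h2 : {y : Inhom f c | ∀ n, coord n y ∈ omegaLimitSet f c} = univ :=
      eq_univ_of_forall fun y n => coord_mem n y
    rw [h2] at h1
    exact infinite_univ h1
  have hXi : Infinite (omegaLimitSet f c) := hXinf.to_subtype
  have hcX' : c ∉ omegaLimitSet f c := critical_notMem hfc hXc.to_set hXinf
  -- the derivatives of `ω(c)` are invariant under `f`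
  have hDX : ∀ γ, MapsTo f (Subtype.val '' CB (omegaLimitSet f c) γ)
      (Subtype.val '' CB (omegaLimitSet f c) γ) := by
    intro γ
    have hloc : ∀ x : omegaLimitSet f c, ∃ U ∈ 𝓝 x, InjOn (hmaps.restrict f _ _) U := by
      intro x
      obtain ⟨U, hU, hinj⟩ := exists_injOn_nhds hf (x := x.1)
        (ne_of_mem_of_not_mem x.2 hcX')
      exact ⟨Subtype.val ⁻¹' U, continuous_subtype_val.continuousAt hU, fun a ha b hb hab =>
        Subtype.ext (hinj ha hb (congrArg Subtype.val hab))⟩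
    have := mapsTo_CB ((hfc.continuousOn).mapsToRestrict hmaps) hloc γ
    rintro _ ⟨x, hx, rfl⟩
    exact ⟨_, this hx, rfl⟩
  have hdrop : ∀ γ, MapsTo dropShift (CB (Inhom f c) γ) (CB (Inhom f c) γ) :=
    mapsTo_CB continuous_dropShift fun x => ⟨univ, univ_mem,
      (Function.LeftInverse.injective (push_drop hfc)).injOn⟩
  have hpush : ∀ γ, MapsTo (pushShift hfc) (CB (Inhom f c) γ) (CB (Inhom f c) γ) :=
    mapsTo_CB (continuous_pushShift hfc) fun x => ⟨univ, univ_mem,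
      (Function.LeftInverse.injective (drop_push hfc)).injOn⟩
  have hDY : ∀ γ, MapsTo f (coord 0 '' CB (Inhom f c) γ) (coord 0 '' CB (Inhom f c) γ) := by
    rintro γ _ ⟨y, hy, rfl⟩
    exact ⟨_, hpush γ hy, rfl⟩
  have hDYs : ∀ γ, f '' (coord 0 '' CB (Inhom f c) γ) = coord 0 '' CB (Inhom f c) γ := by
    intro γ
    refine subset_antisymm (hDY γ).image_subset ?_
    rintro _ ⟨y, hy, rfl⟩
    exact ⟨_, ⟨_, hdrop γ hy, rfl⟩, map_coord 0 y⟩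
  obtain ⟨α, hα1, hα2, -⟩ := exists_succ_rank (X := omegaLimitSet f c) (by
    intro γ hfin
    obtain ⟨V, hV, hPV, hiso⟩ := exists_isolating hf hleo hcX' hmaps
      (by rintro _ ⟨x, -, rfl⟩; exact x.2) (hfin.image Subtype.val) (hDX γ)
    refine ⟨Subtype.val ⁻¹' V, hV.preimage continuous_subtype_val,
      fun x hx => hPV ⟨x, hx, rfl⟩, fun δ _ hδ => ?_⟩
    have := hiso (Subtype.val '' CB (omegaLimitSet f c) δ)
      (by rintro _ ⟨x, -, rfl⟩; exact x.2) (hDX δ) (image_subset_iff.2 hδ)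
    exact Finite.of_finite_image ((hfin.image _).subset this) Subtype.val_injective.injOn)
  obtain ⟨β, hβ1, hβ2, hβ3⟩ := exists_succ_rank (X := Inhom f c) (by
    intro γ hfin
    obtain ⟨V, hV, hPV, hiso⟩ := exists_isolating hf hleo hcX' hmaps
      (by rintro _ ⟨x, -, rfl⟩; exact coord_mem 0 x) (hfin.image (coord 0)) (hDY γ)
    refine ⟨coord 0 ⁻¹' V, hV.preimage (continuous_coord 0),
      fun x hx => hPV ⟨x, hx, rfl⟩, fun δ _ hδ => ?_⟩
    have hsub := hiso (coord 0 '' CB (Inhom f c) δ)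
      (by rintro _ ⟨x, -, rfl⟩; exact coord_mem 0 x) (hDY δ) (image_subset_iff.2 hδ)
    refine (finite_threads (hfin.image (coord 0)) (hDYs γ)).subset fun y hy n => ?_
    have hn : ∀ (n : ℕ) (y : Inhom f c), coord n y = coord 0 (dropShift^[n] y) := by
      intro n
      induction n with
      | zero => exact fun _ => rfl
      | succ n ih =>
        intro y
        rw [Function.iterate_succ_apply, ← ih]
        rfl
    rw [hn n y]
    exact hsub ⟨_, (hdrop δ).iterate n hy, rfl⟩)
  have hαβ : α ≤ β := by
    by_contra hlt
    obtain ⟨x, hx⟩ := hα1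
    obtain ⟨y, hy, -⟩ := CB_subset_image hpc hps _ hx
    have hle : β + 1 + 1 ≤ α + 1 := by
      gcongr
      exact Order.add_one_le_of_lt (not_le.1 hlt)
    have : y ∈ CB (Inhom f c) (β + 1 + 1) := CB_anti hle hy
    rw [hβ3] at this
    exact this
  exact ⟨α, β, (CB (omegaLimitSet f c) (α + 1)).ncard, (CB (Inhom f c) (β + 1)).ncard,
    card_le_of_CB_nonempty (hα1.mono (CB_anti le_self_add)),
    card_le_of_CB_nonempty (hβ1.mono (CB_anti le_self_add)), hαβ,
    (ncard_pos hα2).2 hα1, (ncard_pos hβ2).2 hβ1,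
    homeoOrd_of_CB (by simp) hα2 hα1, homeoOrd_of_CB (by simp) hβ2 hβ1⟩

end
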